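/- arXiv:2504.19054 — 2 statements merged into one kernel-verified Lean document; each statement's English description precedes it below -/
import Mathlib

section
/- Let M ∈ ℝ^{n×n} be an invertible RDDL matrix, let b ∈ ℝ^n be a nonnegative vector, and let x̄ := M^{-1}b (so x̄ is nonnegative). Let F ⊊ [n], S := [n] \ F (nonempty), θ ≥ 0, and let x̃ be a nonnegative vector indexed by F with x̃ ≈_θ x̄_F entrywise. Then the vector x̂ := (M_{S,S})^{-1}(b_S − M_{S,F} x̃) satisfies x̂ ≈_θ x̄_S entrywise. -/
open Matrix

/-- A matrix `M` (over any finite index type) is an RDDL matrix. -/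
def IsRDDL {ι : Type*} [Fintype ι] [DecidableEq ι] (M : Matrix ι ι ℝ) : Prop :=
  (∀ i, 0 < M i i) ∧ (∀ i j, i ≠ j → M i j ≤ 0) ∧
    (∀ i, ∑ j ∈ Finset.univ.erase i, |M i j| ≤ M i i)

/-- The submatrix `M_{S,T}` of `M` with rows indexed by `S` and columns indexed by `T`. -/
def submatrixOn {n : ℕ} (M : Matrix (Fin n) (Fin n) ℝ) (S T : Finset (Fin n)) :
    Matrix {i // i ∈ S} {j // j ∈ T} ℝ :=
  Matrix.of fun i j => M i.val j.val

/-- `a ≈_ε b` : `e^{-ε}·a ≤ b ≤ e^{ε}·a`. -/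
def EApprox (ε a b : ℝ) : Prop := Real.exp (-ε) * a ≤ b ∧ b ≤ Real.exp ε * a

/-!
Row diagonal dominance says `M 1 ≥ 0`. For invertible `M` this makes `v = M⁻¹ 1 + t 1`, with `t`
large, a positive vector with `M v > 0`. Such a certificate restricts to `S`, because the entries
of `M_{S,F}` are nonpositive; it shows that `M_{S,S}` is invertible and, by comparing a vector with
multiples of `v`, that `(M_{S,S})⁻¹ ≥ 0`. Solving the rows of `M x̄ = b` indexed by `S` then gives
`x̄_S = (M_{S,S})⁻¹ b_S + N x̄_F` with the nonnegative matrix `N = -(M_{S,S})⁻¹ M_{S,F}`, and `x̂`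
is the same expression in `x̃`. Nonnegative linear maps preserve entrywise approximation, and so
does adding a nonnegative vector.
-/

theorem mulVec_inv_mulVec {ι R : Type*} [Fintype ι] [DecidableEq ι] [CommRing R] {A : Matrix ι ι R}
    (hA : IsUnit A) (x : ι → R) : A *ᵥ (A⁻¹ *ᵥ x) = x := by
  rw [mulVec_mulVec, mul_nonsing_inv _ ((isUnit_iff_isUnit_det _).mp hA), one_mulVec]

section MMatrix

variable {ι κ R K : Type*} [Fintype ι] [Fintype κ]

/-- A nonsingular M-matrix, in the semipositivity characterisation: the off-diagonal entries are
nonpositive and some positive vector has a positive image. It carries over to principal submatrices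
at once, unlike the definition through invertibility and nonnegativity of the inverse. -/
structure IsNonsingularMMatrix [Ring R] [PartialOrder R] (M : Matrix ι ι R) : Prop where
  offDiag_nonpos : ∀ i j, i ≠ j → M i j ≤ 0
  exists_pos_mulVec_pos : ∃ v : ι → R, (∀ i, 0 < v i) ∧ ∀ i, 0 < (M *ᵥ v) i

namespace IsNonsingularMMatrix

theorem submatrix [Ring R] [PartialOrder R] [IsOrderedRing R] {M : Matrix ι ι R}
    (hM : IsNonsingularMMatrix M) (e : κ ↪ ι) :
    IsNonsingularMMatrix (M.submatrix e e) := by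
  obtain ⟨v, hv, hMv⟩ := hM.exists_pos_mulVec_pos
  refine ⟨fun i j hij ↦ hM.offDiag_nonpos _ _ (e.injective.ne hij), v ∘ e, fun i ↦ hv (e i),
    fun i ↦ (hMv (e i)).trans_le ?_⟩
  have outside_nonpos : ∀ j ∉ Finset.univ.map e, M (e i) j * v j ≤ 0 := fun j hj ↦
    mul_nonpos_of_nonpos_of_nonneg
      (hM.offDiag_nonpos _ _ fun h ↦ hj (h ▸ Finset.mem_map_of_mem e (Finset.mem_univ i)))
      (hv j).le
  calc (M *ᵥ v) (e i) ≤ ∑ j ∈ Finset.univ.map e, M (e i) j * v j :=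
        Finset.sum_le_sum_of_subset_of_nonpos' (Finset.subset_univ _) fun j _ ↦ outside_nonpos j
    _ = (M.submatrix e e *ᵥ (v ∘ e)) i := Finset.sum_map _ _ _

variable [Field K] [LinearOrder K] [IsStrictOrderedRing K] {M : Matrix ι ι K}

theorem nonneg_of_mulVec_nonneg (hM : IsNonsingularMMatrix M) {z : ι → K} (hz : 0 ≤ M *ᵥ z) :
    0 ≤ z := by
  obtain ⟨v, hv, hMv⟩ := hM.exists_pos_mulVec_pos
  by_contra hneg
  obtain ⟨i, hi⟩ : ∃ i, z i < 0 := by simpa [Pi.le_def] using hneg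
  have : Nonempty ι := ⟨i⟩
  obtain ⟨k, hk⟩ := Finite.exists_min fun j ↦ z j / v j
  set r := z k / v k
  have r_neg : r < 0 := (hk i).trans_lt (div_neg_of_neg_of_pos hi (hv i))
  have le_z : ∀ j, r * v j ≤ z j := fun j ↦ (le_div_iff₀ (hv j)).mp (hk j)
  have eq_z : r * v k = z k := div_mul_cancel₀ _ (hv k).ne'
  have mulVec_le : (M *ᵥ z) k ≤ r * (M *ᵥ v) k := by
    simp only [mulVec, dotProduct, Finset.mul_sum, mul_left_comm r]
    refine Finset.sum_le_sum fun j _ ↦ ?_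
    obtain rfl | hkj := eq_or_ne k j
    · rw [eq_z]
    · exact mul_le_mul_of_nonpos_left (le_z j) (hM.offDiag_nonpos k j hkj)
  exact (mulVec_le.trans_lt (mul_neg_of_neg_of_pos r_neg (hMv k))).not_ge (hz k)

variable [DecidableEq ι]

theorem isUnit (hM : IsNonsingularMMatrix M) : IsUnit M := by
  refine mulVec_injective_iff_isUnit.mp fun x y hxy ↦ ?_
  have le_of_mulVec_eq {x y : ι → K} (h : M *ᵥ x = M *ᵥ y) : x ≤ y :=
    sub_nonneg.mp <| hM.nonneg_of_mulVec_nonneg <| by rw [mulVec_sub, h, sub_self]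
  exact (le_of_mulVec_eq hxy).antisymm (le_of_mulVec_eq hxy.symm)

theorem inv_nonneg (hM : IsNonsingularMMatrix M) (i j : ι) : 0 ≤ M⁻¹ i j := by
  have mulVec_col : M *ᵥ M⁻¹.col j = Pi.single j 1 := by
    rw [← mulVec_single_one, mulVec_inv_mulVec hM.isUnit]
  have single_nonneg : (0 : ι → K) ≤ Pi.single j 1 := Pi.single_nonneg.mpr zero_le_one
  exact hM.nonneg_of_mulVec_nonneg (mulVec_col ▸ single_nonneg) i

end IsNonsingularMMatrix

end MMatrix

namespace IsRDDL

variable {ι : Type*} [Fintype ι] [DecidableEq ι] {M : Matrix ι ι ℝ}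

theorem mulVec_one_nonneg (hM : IsRDDL M) : 0 ≤ M *ᵥ 1 := by
  obtain ⟨-, offDiag_nonpos, dominant⟩ := hM
  intro i
  have sum_abs : ∑ j ∈ Finset.univ.erase i, |M i j| = -∑ j ∈ Finset.univ.erase i, M i j := by
    rw [← Finset.sum_neg_distrib]
    exact Finset.sum_congr rfl fun j hj ↦
      abs_of_nonpos (offDiag_nonpos i j (Finset.ne_of_mem_erase hj).symm)
  calc (0 : ℝ) ≤ M i i + ∑ j ∈ Finset.univ.erase i, M i j := by linarith [dominant i]
    _ = ∑ j, M i j := Finset.add_sum_erase _ _ (Finset.mem_univ i)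
    _ = (M *ᵥ 1) i := by simp [mulVec, dotProduct]

theorem isNonsingularMMatrix (hM : IsRDDL M) (hInv : IsUnit M) : IsNonsingularMMatrix M := by
  set u := M⁻¹ *ᵥ 1
  have mulVec_u : M *ᵥ u = 1 := mulVec_inv_mulVec hInv 1
  have shift_nonneg : 0 ≤ 1 + ∑ j, |u j| := by positivity
  refine ⟨hM.2.1, u + (1 + ∑ j, |u j|) • 1, fun i ↦ ?_, fun i ↦ ?_⟩
  · have abs_le_sum : |u i| ≤ ∑ j, |u j| :=
      Finset.single_le_sum (fun j _ ↦ abs_nonneg (u j)) (Finset.mem_univ i)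
    simp only [Pi.add_apply, Pi.smul_apply, Pi.one_apply, smul_eq_mul, mul_one]
    linarith [neg_abs_le (u i)]
  · rw [mulVec_add, mulVec_smul, mulVec_u]
    exact add_pos_of_pos_of_nonneg one_pos (mul_nonneg shift_nonneg (hM.mulVec_one_nonneg i))

variable {n : ℕ} {M : Matrix (Fin n) (Fin n) ℝ}

theorem isNonsingularMMatrix_submatrixOn (hM : IsRDDL M) (hInv : IsUnit M) (S : Finset (Fin n)) :
    IsNonsingularMMatrix (submatrixOn M S S) :=
  (hM.isNonsingularMMatrix hInv).submatrix (.subtype (· ∈ S))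

theorem submatrixOn_nonpos (hM : IsRDDL M) {S T : Finset (Fin n)} (hST : Disjoint S T)
    (i : {i // i ∈ S}) (j : {j // j ∈ T}) : submatrixOn M S T i j ≤ 0 :=
  hM.2.1 _ _ (Finset.disjoint_iff_ne.mp hST _ i.2 _ j.2)

end IsRDDL

namespace EApprox

variable {ε a b c d : ℝ}

theorem refl_of_nonneg (hε : 0 ≤ ε) (ha : 0 ≤ a) : EApprox ε a a :=
  ⟨mul_le_of_le_one_left ha (Real.exp_le_one_iff.mpr (neg_nonpos.mpr hε)),
    le_mul_of_one_le_left ha (Real.one_le_exp hε)⟩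

theorem add (hab : EApprox ε a b) (hcd : EApprox ε c d) : EApprox ε (a + c) (b + d) :=
  ⟨mul_add _ a c ▸ add_le_add hab.1 hcd.1, mul_add _ a c ▸ add_le_add hab.2 hcd.2⟩

theorem const_mul (hc : 0 ≤ c) (hab : EApprox ε a b) : EApprox ε (c * a) (c * b) :=
  ⟨mul_left_comm c _ a ▸ mul_le_mul_of_nonneg_left hab.1 hc,
    mul_left_comm c _ a ▸ mul_le_mul_of_nonneg_left hab.2 hc⟩

theorem sum {ι : Type*} {s : Finset ι} {f g : ι → ℝ} (h : ∀ i ∈ s, EApprox ε (f i) (g i)) :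
    EApprox ε (∑ i ∈ s, f i) (∑ i ∈ s, g i) := by
  simp only [EApprox, Finset.mul_sum]
  exact ⟨Finset.sum_le_sum fun i hi ↦ (h i hi).1, Finset.sum_le_sum fun i hi ↦ (h i hi).2⟩

theorem mulVec {σ φ : Type*} [Fintype φ] {N : Matrix σ φ ℝ} (hN : ∀ i j, 0 ≤ N i j) {x y : φ → ℝ}
    (h : ∀ j, EApprox ε (x j) (y j)) (i : σ) : EApprox ε ((N *ᵥ x) i) ((N *ᵥ y) i) :=
  sum fun j _ ↦ (h j).const_mul (hN i j)

end EApprox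

section BlockElimination

theorem submatrixOn_mulVec_add_submatrixOn_mulVec {n : ℕ} (M : Matrix (Fin n) (Fin n) ℝ)
    (S F : Finset (Fin n)) (x : Fin n → ℝ) :
    (submatrixOn M S Fᶜ *ᵥ fun j ↦ x j.val) + (submatrixOn M S F *ᵥ fun j ↦ x j.val) =
      fun i ↦ (M *ᵥ x) i.val := by
  funext i
  have sum_split := Finset.sum_compl_add_sum F fun j ↦ M i.val j * x j
  rwa [← Finset.sum_coe_sort F, ← Finset.sum_coe_sort Fᶜ] at sum_split

variable {ρ σ φ R : Type*} [Fintype σ] [Fintype φ]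

theorem mulVec_sub_mulVec [NonUnitalRing R] (C : Matrix ρ σ R) (B : Matrix σ φ R) (b : σ → R)
    (y : φ → R) :
    C *ᵥ (b - B *ᵥ y) = C *ᵥ b + (C * -B) *ᵥ y := by
  rw [sub_eq_add_neg, mulVec_add, ← neg_mulVec, mulVec_mulVec]

theorem remove_large_entries_general [DecidableEq σ] {A : Matrix σ σ ℝ} (hA : IsUnit A)
    (hA_inv : ∀ i j, 0 ≤ A⁻¹ i j) {B : Matrix σ φ ℝ} (hB : ∀ i j, B i j ≤ 0) {b : σ → ℝ}
    (hb : 0 ≤ b) {θ : ℝ} (hθ : 0 ≤ θ) {x : σ → ℝ} {y ytil : φ → ℝ} (hxy : A *ᵥ x + B *ᵥ y = b)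
    (hytil : ∀ j, EApprox θ (ytil j) (y j)) (i : σ) :
    EApprox θ ((A⁻¹ *ᵥ (b - B *ᵥ ytil)) i) (x i) := by
  have x_eq : x = A⁻¹ *ᵥ (b - B *ᵥ y) := by
    rw [← hxy, add_sub_cancel_right, mulVec_mulVec,
      nonsing_inv_mul _ ((isUnit_iff_isUnit_det _).mp hA), one_mulVec]
  have inv_b_nonneg : 0 ≤ (A⁻¹ *ᵥ b) i :=
    Finset.sum_nonneg fun j _ ↦ mul_nonneg (hA_inv i j) (hb j)
  have inv_mul_neg_nonneg : ∀ i j, 0 ≤ (A⁻¹ * -B) i j := fun i j ↦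
    Finset.sum_nonneg fun k _ ↦ mul_nonneg (hA_inv i k) (neg_nonneg.mpr (hB k j))
  rw [x_eq, mulVec_sub_mulVec, mulVec_sub_mulVec]
  exact (EApprox.refl_of_nonneg hθ inv_b_nonneg).add (EApprox.mulVec inv_mul_neg_nonneg hytil i)

end BlockElimination

/-- Substituting an entrywise `e^θ`-approximation `x̃` of `x̄` on `F` into the system and
solving the reduced system on `S = [n] \ F` yields an entrywise `e^θ`-approximation of
`x̄` on `S`. -/
theorem remove_large_entries {n : ℕ}
    (M : Matrix (Fin n) (Fin n) ℝ) (hM : IsRDDL M) (hInv : IsUnit M)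
    (b : Fin n → ℝ) (hb : ∀ i, 0 ≤ b i)
    (xbar : Fin n → ℝ) (hxbar : xbar = M⁻¹ *ᵥ b)
    (F : Finset (Fin n)) (hF : F ⊂ Finset.univ)
    (θ : ℝ) (hθ : 0 ≤ θ)
    (xtil : {i // i ∈ F} → ℝ) (hxtil_nonneg : ∀ i, 0 ≤ xtil i)
    (hxtil : ∀ i : {i // i ∈ F}, EApprox θ (xtil i) (xbar i.val))
    (xhat : {i // i ∈ Fᶜ} → ℝ)
    (hxhat : xhat = (submatrixOn M Fᶜ Fᶜ)⁻¹ *ᵥ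
      fun i : {i // i ∈ Fᶜ} => b i.val - ∑ j : {j // j ∈ F}, M i.val j.val * xtil j) :
    ∀ i : {i // i ∈ Fᶜ}, EApprox θ (xhat i) (xbar i.val) := by
  have hA := hM.isNonsingularMMatrix_submatrixOn hInv Fᶜ
  exact hxhat ▸ remove_large_entries_general hA.isUnit hA.inv_nonneg
    (hM.submatrixOn_nonpos disjoint_compl_left) (fun i ↦ hb i.val) hθ
    (by rw [submatrixOn_mulVec_add_submatrixOn_mulVec, hxbar, mulVec_inv_mulVec hInv]) hxtil
end

section
/- Let δ ∈ (0,1), let n, U > 3, and let M ∈ ℝ^{n×n} be an invertible RDDL matrix with integer entries in [−U, U]. Let S be a random subset of [n] in which each index i ∈ [n] is included independently with probability n^{−1/2}, and set S̄ := [n] \ S. Then with probability at least 1 − δ, the condition number of the (necessarily invertible) principal submatrix M_{S̄,S̄} satisfies κ(M_{S̄,S̄}) := ‖M_{S̄,S̄}‖₂·‖(M_{S̄,S̄})^{-1}‖₂ ≤ exp(6·√n·(ln U)·ln(n/δ)), where by convention the condition number of the empty matrix (when S̄ = ∅) is 1. -/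
open Matrix MeasureTheory

open Classical in
/-- The ℓ₂ condition number `‖A‖₂ · ‖A⁻¹‖₂` of a square real matrix, with the convention
that the condition number of the empty matrix is `1`. -/
noncomputable def condNum {ι : Type*} [Fintype ι] [DecidableEq ι] (A : Matrix ι ι ℝ) : ℝ :=
  if Nonempty ι then
    ‖Matrix.toEuclideanCLM (𝕜 := ℝ) A‖ * ‖Matrix.toEuclideanCLM (𝕜 := ℝ) A⁻¹‖
  else 1

/-!
Call a row of an RDDL matrix `A` strict if its sum is positive, and draw an edge `i → j` whenever
`A i j < 0`.
* If every index reaches a strict row in at most `L` steps, then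
  `x i = b ^ (L + 1) - b ^ (L - d i)`, with `d` the distance to the strict rows and `b` larger
  than the diagonal, is a positive vector with `A x ≥ 1`. By the maximum principle `A` is
  invertible and `0 ≤ A⁻¹ i j ≤ x i`.
* If `M` is invertible, every index reaches a strict row. Removing a vertex `v` makes every row
  with an edge to `v` strict; hence an index at distance more than `L` in `M` comes within distance
  `L` as soon as one of the first `L + 1` vertices of a shortest path is removed. If each vertex is
  removed with probability `p`, this fails with probability at most `(1 - p) ^ (L + 1)`, and a union
  bound over the `n` indices allows `L = ⌊ln (n / δ) / p⌋`.
-/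

open ProbabilityTheory unitInterval

variable {ι : Type*} [Fintype ι]

section RowSums

variable [DecidableEq ι] {M : Matrix ι ι ℝ}

lemma isRDDL_iff_sum_row_nonneg :
    IsRDDL M ↔ (∀ i, 0 < M i i) ∧ (∀ i j, i ≠ j → M i j ≤ 0) ∧ ∀ i, 0 ≤ ∑ j, M i j := by
  refine and_congr_right fun _ => and_congr_right fun hoff => forall_congr' fun i => ?_
  have habs : ∑ j ∈ Finset.univ.erase i, |M i j| = -∑ j ∈ Finset.univ.erase i, M i j := by
    rw [← Finset.sum_neg_distrib]
    exact Finset.sum_congr rfl fun j hj =>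
      abs_of_nonpos (hoff i j (Finset.ne_of_mem_erase hj).symm)
  rw [habs, neg_le_iff_add_nonneg, Finset.add_sum_erase _ _ (Finset.mem_univ i)]

lemma IsRDDL.sum_row_nonneg (hM : IsRDDL M) (i : ι) : 0 ≤ ∑ j, M i j :=
  (isRDDL_iff_sum_row_nonneg.mp hM).2.2 i

lemma IsRDDL.ne_of_apply_neg (hM : IsRDDL M) {i j : ι} (hij : M i j < 0) : i ≠ j := by
  rintro rfl
  exact hij.not_gt (hM.1 i)

lemma IsRDDL.abs_apply_le_diag (hM : IsRDDL M) (i j : ι) : |M i j| ≤ M i i := by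
  rcases eq_or_ne j i with rfl | hji
  · exact (abs_of_pos (hM.1 j)).le
  · exact (Finset.single_le_sum (fun k _ => abs_nonneg (M i k))
      (Finset.mem_erase.mpr ⟨hji, Finset.mem_univ j⟩)).trans (hM.2.2 i)

variable {q : ι → Prop} [DecidablePred q]

lemma IsRDDL.sum_row_le_toSquareBlockProp (hM : IsRDDL M) (i : {i // q i}) :
    ∑ j, M i j ≤ ∑ j, M.toSquareBlockProp q i j := by
  rw [← Fintype.sum_subtype_add_sum_subtype q (M i)]
  exact add_le_of_nonpos_right <| Finset.sum_nonpos fun j _ =>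
    hM.2.1 i j fun hij => j.2 (hij ▸ i.2)

lemma IsRDDL.toSquareBlockProp (hM : IsRDDL M) : IsRDDL (M.toSquareBlockProp q) :=
  isRDDL_iff_sum_row_nonneg.mpr
    ⟨fun i => hM.1 i, fun i j hij => hM.2.1 i j (Subtype.coe_ne_coe.mpr hij),
    fun i => (hM.sum_row_nonneg i).trans (hM.sum_row_le_toSquareBlockProp i)⟩

lemma IsRDDL.sum_row_toSquareBlockProp_pos (hM : IsRDDL M) (i : {i // q i}) {j : ι} (hj : ¬ q j)
    (hij : M i j < 0) : 0 < ∑ k, M.toSquareBlockProp q i k := by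
  have hremoved : ∑ k : {k // ¬ q k}, M i k < 0 :=
    Finset.sum_neg' (fun k _ => hM.2.1 i k fun hik => k.2 (hik ▸ i.2))
      ⟨⟨j, hj⟩, Finset.mem_univ _, hij⟩
  have hsum := Fintype.sum_subtype_add_sum_subtype q (M i)
  have hrow := hM.sum_row_nonneg i
  change 0 < ∑ k : {k // q k}, M i k
  linarith

end RowSums

section Escape

/-- In the graph with an edge `i → j` whenever `A i j < 0`, the vertex `i` reaches a row with
positive sum in at most `k` steps. -/
inductive EscapesWithin (A : Matrix ι ι ℝ) : ℕ → ι → Prop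
  | of_sum_row_pos {k : ℕ} {i : ι} : 0 < ∑ j, A i j → EscapesWithin A k i
  | step {k : ℕ} {i j : ι} : A i j < 0 → EscapesWithin A k j → EscapesWithin A (k + 1) i

lemma EscapesWithin.mono {A : Matrix ι ι ℝ} {k l : ℕ} {i : ι} (h : EscapesWithin A k i)
    (hkl : k ≤ l) : EscapesWithin A l i := by
  induction h generalizing l with
  | of_sum_row_pos hi => exact .of_sum_row_pos hi
  | step hij _ ih =>
    obtain ⟨m, rfl⟩ := Nat.exists_eq_add_of_le' hkl
    exact .step hij (ih (Nat.le_add_left _ m))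

variable [DecidableEq ι] {M : Matrix ι ι ℝ}

/-- At a smallest entry of `M⁻¹ *ᵥ 1` over the vertices that do not escape, the row of `M` would
give a nonpositive value instead of `1`. -/
lemma IsRDDL.exists_escapesWithin (hM : IsRDDL M) (hInv : IsUnit M) (i : ι) :
    ∃ k, EscapesWithin M k i := by
  by_contra hi
  obtain ⟨x, hx⟩ := (mulVec_surjective_iff_isUnit.mpr hInv) 1
  obtain ⟨m, hm, hmin⟩ := (Set.toFinite {m | ¬ ∃ k, EscapesWithin M k m}).exists_minimalFor
    x _ ⟨i, hi⟩
  have hsum : ∑ j, M m j = 0 :=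
    ((hM.sum_row_nonneg m).eq_of_not_lt fun h => hm ⟨0, .of_sum_row_pos h⟩).symm
  have hterm (j : ι) : M m j * (x j - x m) ≤ 0 := by
    rcases eq_or_ne m j with rfl | hmj
    · simp
    by_cases hj : ∃ k, EscapesWithin M k j
    · obtain ⟨k, hk⟩ := hj
      have hmj0 : M m j = 0 :=
        (hM.2.1 m j hmj).eq_of_not_lt fun h => hm ⟨k + 1, .step h hk⟩
      simp [hmj0]
    · have hle : x m ≤ x j := (le_total (x m) (x j)).elim id (hmin hj)
      exact mul_nonpos_of_nonpos_of_nonneg (hM.2.1 m j hmj) (sub_nonneg.mpr hle)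
  have hone : (1 : ℝ) = ∑ j, M m j * (x j - x m) := by
    simp only [mul_sub, Finset.sum_sub_distrib, ← Finset.sum_mul, hsum, zero_mul, sub_zero]
    exact (congrFun hx m).symm
  exact (Finset.sum_nonpos fun j _ => hterm j).not_gt (hone ▸ one_pos)

lemma EscapesWithin.toSquareBlockProp (hM : IsRDDL M) {q : ι → Prop} [DecidablePred q] {k : ℕ}
    {i : ι} (h : EscapesWithin M k i) (hi : q i) :
    EscapesWithin (M.toSquareBlockProp q) k ⟨i, hi⟩ := by
  induction h with
  | of_sum_row_pos h => exact .of_sum_row_pos (h.trans_le (hM.sum_row_le_toSquareBlockProp ⟨_, hi⟩))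
  | @step _ _ j hij _ ih =>
    by_cases hj : q j
    · exact .step (j := ⟨j, hj⟩) hij (ih hj)
    · exact .of_sum_row_pos (hM.sum_row_toSquareBlockProp_pos ⟨_, hi⟩ hj hij)

/-- `T` consists of the first `L + 1` vertices of a shortest path from `i` to a row with positive
sum. -/
lemma EscapesWithin.exists_finset_card_eq (hM : IsRDDL M) {k L : ℕ} {i : ι}
    (hk : EscapesWithin M k i) (hL : ¬ EscapesWithin M L i) :
    ∃ T : Finset ι, T.card = L + 1 ∧ (∀ v ∈ T, EscapesWithin M k v) ∧
      ∀ (q : ι → Prop) [DecidablePred q], (∃ v ∈ T, ¬ q v) →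
        ∀ hi : q i, EscapesWithin (M.toSquareBlockProp q) L ⟨i, hi⟩ := by
  induction k generalizing L i with
  | zero => exact absurd (hk.mono L.zero_le) hL
  | succ k ih =>
    by_cases hki : EscapesWithin M k i
    · obtain ⟨T, hcard, hT, hesc⟩ := ih hki hL
      exact ⟨T, hcard, fun v hv => (hT v hv).mono k.le_succ, hesc⟩
    cases hk with
    | of_sum_row_pos h => exact absurd (.of_sum_row_pos h) hL
    | @step _ _ j hij hj =>
      cases L with
      | zero =>
        refine ⟨{i}, rfl, by simpa using .step hij hj, fun q _ hv hi => ?_⟩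
        simp [hi] at hv
      | succ L =>
        obtain ⟨T, hcard, hT, hesc⟩ := ih hj fun h => hL (.step hij h)
        refine ⟨insert i T, ?_, ?_, fun q _ hv hi => ?_⟩
        · rw [Finset.card_insert_of_notMem fun hiT => hki (hT i hiT), hcard]
        · exact Finset.forall_mem_insert _ _ _ |>.mpr
            ⟨.step hij hj, fun v hv => (hT v hv).mono k.le_succ⟩
        · have hvT : ∃ v ∈ T, ¬ q v := by simpa [hi] using hv
          by_cases hqj : q j
          · exact .step (j := ⟨j, hqj⟩) hij (hesc q hvT hqj)
          · exact .of_sum_row_pos (hM.sum_row_toSquareBlockProp_pos ⟨i, hi⟩ hqj hij)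

end Escape

section Barrier

/-- A barrier for `A`: a positive vector `x` with `A x ≥ 1` entrywise. If the off-diagonal entries
of `A` are nonpositive, it bounds `A⁻¹` from above. -/
structure IsBarrier (A : Matrix ι ι ℝ) (x : ι → ℝ) : Prop where
  pos : ∀ i, 0 < x i
  one_le_mulVec : ∀ i, 1 ≤ (A *ᵥ x) i

namespace IsBarrier

variable {A : Matrix ι ι ℝ} {x : ι → ℝ}

/-- Look at an index `m` minimizing `y m / x m`. -/
lemma nonneg_of_mulVec_nonneg (hx : IsBarrier A x) (hA : ∀ i j, i ≠ j → A i j ≤ 0) {y : ι → ℝ}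
    (hy : 0 ≤ A *ᵥ y) : 0 ≤ y := by
  intro i
  have : Nonempty ι := ⟨i⟩
  obtain ⟨m, hm⟩ := Finite.exists_min fun j => y j / x j
  set r := y m / x m with hr
  have hry (j : ι) : r * x j ≤ y j := (le_div_iff₀ (hx.pos j)).mp (hm j)
  suffices hr0 : 0 ≤ r from (mul_nonneg hr0 (hx.pos i).le).trans (hry i)
  have hterm (j : ι) : A m j * (y j - r * x j) ≤ 0 := by
    rcases eq_or_ne m j with rfl | hmj
    · simp [hr, div_mul_cancel₀ _ (hx.pos m).ne']
    · exact mul_nonpos_of_nonpos_of_nonneg (hA m j hmj) (sub_nonneg.mpr (hry j))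
  have hrow : (A *ᵥ y) m - r * (A *ᵥ x) m ≤ 0 := by
    calc (A *ᵥ y) m - r * (A *ᵥ x) m = ∑ j, A m j * (y j - r * x j) := by
          simp only [mulVec, dotProduct, Finset.mul_sum, ← Finset.sum_sub_distrib]
          exact Finset.sum_congr rfl fun j _ => by ring
      _ ≤ 0 := Finset.sum_nonpos fun j _ => hterm j
  have hprod : 0 ≤ r * (A *ᵥ x) m := (hy m).trans (sub_nonpos.mp hrow)
  exact nonneg_of_mul_nonneg_left hprod (one_pos.trans_le (hx.one_le_mulVec m))

variable [DecidableEq ι]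

lemma isUnit (hx : IsBarrier A x) (hA : ∀ i j, i ≠ j → A i j ≤ 0) : IsUnit A := by
  refine mulVec_injective_iff_isUnit.mp fun y z hyz => le_antisymm ?_ ?_ <;>
    refine sub_nonneg.mp (hx.nonneg_of_mulVec_nonneg hA ?_) <;>
    simp [mulVec_sub, hyz]

lemma abs_inv_apply_le (hx : IsBarrier A x) (hA : ∀ i j, i ≠ j → A i j ≤ 0) (i j : ι) :
    |A⁻¹ i j| ≤ x i := by
  have hcol : A *ᵥ A⁻¹.col j = Pi.single j 1 := by
    rw [← mulVec_single_one, mulVec_mulVec,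
      mul_nonsing_inv A ((isUnit_iff_isUnit_det A).mp (hx.isUnit hA)), one_mulVec]
  have hnonneg : 0 ≤ A⁻¹.col j := hx.nonneg_of_mulVec_nonneg hA <| by
    rw [hcol]
    exact Pi.single_nonneg.mpr zero_le_one
  have hle : 0 ≤ x - A⁻¹.col j := hx.nonneg_of_mulVec_nonneg hA fun k => by
    rw [mulVec_sub, hcol]
    have hsingle : (Pi.single j 1 : ι → ℝ) k ≤ 1 := by
      rw [Pi.single_apply]
      split_ifs <;> norm_num
    exact sub_nonneg.mpr (hsingle.trans (hx.one_le_mulVec k))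
  exact (abs_of_nonneg (hnonneg i)).trans_le (sub_nonneg.mp (hle i))

end IsBarrier

variable [DecidableEq ι] {A : Matrix ι ι ℝ} {U : ℝ}

lemma one_le_of_mem_range_intCast {a : ℝ} (ha : a ∈ (Int.castRingHom ℝ).range) (ha0 : 0 < a) :
    1 ≤ a := by
  obtain ⟨z, rfl⟩ := ha
  have hz : 0 < z := by simpa using ha0
  simpa using Int.cast_le (R := ℝ).mpr (Int.add_one_le_of_lt hz)

lemma IsRDDL.one_le_mulVec_const_sub (hA : IsRDDL A)
    (hint : ∀ i j, A i j ∈ (Int.castRingHom ℝ).range) (hdiag : ∀ i, A i i ≤ U)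
    {w : ι → ℝ} (hw : ∀ i, 1 ≤ w i) {W : ℝ} (hW : 0 ≤ W) {i : ι}
    (hi : (0 < ∑ j, A i j) ∧ (U + 1) * w i ≤ W ∨ ∃ j, A i j < 0 ∧ (U + 1) * w i ≤ w j) :
    1 ≤ (A *ᵥ fun j => W - w j) i := by
  have hoff : ∀ j ∈ Finset.univ.erase i, 0 ≤ -A i j * w j := fun j hj =>
    mul_nonneg (neg_nonneg.mpr (hA.2.1 i j (Finset.ne_of_mem_erase hj).symm))
      (zero_le_one.trans (hw j))
  have hexpand : (A *ᵥ fun j => W - w j) i =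
      (∑ j, A i j) * W - A i i * w i + ∑ j ∈ Finset.univ.erase i, -A i j * w j := by
    have hsplit := Finset.add_sum_erase Finset.univ (fun j => A i j * w j) (Finset.mem_univ i)
    simp only [mulVec, dotProduct, mul_sub, Finset.sum_sub_distrib, neg_mul,
      Finset.sum_neg_distrib, ← Finset.sum_mul, ← hsplit]
    ring
  have hdiagw : A i i * w i + 1 ≤ (U + 1) * w i := by nlinarith [hdiag i, hw i]
  suffices hgain : (U + 1) * w i ≤
      (∑ j, A i j) * W + ∑ j ∈ Finset.univ.erase i, -A i j * w j by linarith
  rcases hi with ⟨hsum, hwW⟩ | ⟨j, hij, hwj⟩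
  · have hsum1 : 1 ≤ ∑ j, A i j :=
      one_le_of_mem_range_intCast (sum_mem fun j _ => hint i j) hsum
    linarith [le_mul_of_one_le_left hW hsum1, Finset.sum_nonneg hoff]
  · have hij1 : 1 ≤ -A i j := one_le_of_mem_range_intCast (neg_mem (hint i j)) (neg_pos.mpr hij)
    have hj : j ∈ Finset.univ.erase i :=
      Finset.mem_erase.mpr ⟨(hA.ne_of_apply_neg hij).symm, Finset.mem_univ j⟩
    linarith [Finset.single_le_sum hoff hj, mul_nonneg (hA.sum_row_nonneg i) hW,
      le_mul_of_one_le_left (zero_le_one.trans (hw j)) hij1]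

lemma IsRDDL.exists_isBarrier (hA : IsRDDL A) (hint : ∀ i j, A i j ∈ (Int.castRingHom ℝ).range)
    (hdiag : ∀ i, A i i ≤ U) {L : ℕ} (hesc : ∀ i, EscapesWithin A L i) :
    ∃ x, IsBarrier A x ∧ ∀ i, x i ≤ (U + 1) ^ (L + 1) := by
  classical
  have hex (i : ι) : ∃ k, EscapesWithin A k i := ⟨L, hesc i⟩
  let d (i : ι) : ℕ := Nat.find (hex i)
  have hdL (i : ι) : d i ≤ L := Nat.find_min' _ (hesc i)
  have hU (i : ι) : 1 < U + 1 := by linarith [hA.1 i, hdiag i]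
  have hw (i : ι) : 1 ≤ (U + 1) ^ (L - d i) := one_le_pow₀ (hU i).le
  refine ⟨fun i => (U + 1) ^ (L + 1) - (U + 1) ^ (L - d i), ⟨fun i => ?_, fun i => ?_⟩,
    fun i => sub_le_self _ (zero_le_one.trans (hw i))⟩
  · exact sub_pos.mpr (pow_lt_pow_right₀ (hU i) (by omega))
  · refine hA.one_le_mulVec_const_sub hint hdiag hw (pow_nonneg (by linarith [hU i]) _) ?_
    have hdi : EscapesWithin A (d i) i := Nat.find_spec (hex i)
    have hdiL := hdL i
    generalize d i = k at hdi hdiL ⊢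
    rw [← pow_succ']
    cases hdi with
    | of_sum_row_pos hsum =>
      exact .inl ⟨hsum, pow_le_pow_right₀ (hU i).le (by omega)⟩
    | @step k _ j hij hj =>
      have hdj : d j ≤ k := Nat.find_min' _ hj
      exact .inr ⟨j, hij, pow_le_pow_right₀ (hU i).le (by omega)⟩

end Barrier

section ConditionNumber

variable [DecidableEq ι]

lemma norm_toEuclideanCLM_le_card_mul {𝕜 : Type*} [RCLike 𝕜] (A : Matrix ι ι 𝕜) {c : ℝ}
    (hc : 0 ≤ c) (hA : ∀ i j, ‖A i j‖ ≤ c) :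
    ‖Matrix.toEuclideanCLM (𝕜 := 𝕜) A‖ ≤ Fintype.card ι * c := by
  refine ContinuousLinearMap.opNorm_le_bound _ (by positivity) fun v => ?_
  have hentry (i : ι) : ‖Matrix.toEuclideanCLM (𝕜 := 𝕜) A v i‖ ≤ c * ∑ j, ‖v j‖ := by
    rw [Matrix.ofLp_toEuclideanCLM, Finset.mul_sum]
    refine norm_sum_le_of_le _ fun j _ => ?_
    rw [norm_mul]
    gcongr
    exact hA i j
  rw [← sq_le_sq₀ (norm_nonneg _) (by positivity), EuclideanSpace.norm_sq_eq]
  calc ∑ i, ‖Matrix.toEuclideanCLM (𝕜 := 𝕜) A v i‖ ^ 2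
      ≤ ∑ _i : ι, (c * ∑ j, ‖v j‖) ^ 2 := by gcongr with i; exact hentry i
    _ = Fintype.card ι * c ^ 2 * (∑ j, ‖v j‖) ^ 2 := by simp; ring
    _ ≤ Fintype.card ι * c ^ 2 * (Fintype.card ι * ∑ j, ‖v j‖ ^ 2) := by
        gcongr
        exact sq_sum_le_card_mul_sum_sq
    _ = (Fintype.card ι * c * ‖v‖) ^ 2 := by rw [mul_pow, EuclideanSpace.norm_sq_eq]; ring

lemma condNum_of_isEmpty [IsEmpty ι] (A : Matrix ι ι ℝ) : condNum A = 1 :=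
  if_neg (not_nonempty_iff.mpr ‹_›)

lemma condNum_of_nonempty [Nonempty ι] (A : Matrix ι ι ℝ) :
    condNum A = ‖Matrix.toEuclideanCLM (𝕜 := ℝ) A‖ * ‖Matrix.toEuclideanCLM (𝕜 := ℝ) A⁻¹‖ :=
  if_pos ‹_›

lemma IsRDDL.isUnit_and_condNum_le [Nonempty ι] {A : Matrix ι ι ℝ} {U : ℝ} (hA : IsRDDL A)
    (hint : ∀ i j, A i j ∈ (Int.castRingHom ℝ).range) (hdiag : ∀ i, A i i ≤ U) {L : ℕ}
    (hesc : ∀ i, EscapesWithin A L i) :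
    IsUnit A ∧ condNum A ≤ (Fintype.card ι : ℝ) ^ 2 * (U + 1) ^ (L + 2) := by
  obtain ⟨x, hx, hxU⟩ := hA.exists_isBarrier hint hdiag hesc
  have hU : 0 ≤ U + 1 := by
    linarith [hA.1 (Classical.arbitrary ι), hdiag (Classical.arbitrary ι)]
  have hnorm : ‖Matrix.toEuclideanCLM (𝕜 := ℝ) A‖ ≤ Fintype.card ι * (U + 1) :=
    norm_toEuclideanCLM_le_card_mul A hU fun i j => by
      rw [Real.norm_eq_abs]
      linarith [hA.abs_apply_le_diag i j, hdiag i]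
  have hnorm_inv : ‖Matrix.toEuclideanCLM (𝕜 := ℝ) A⁻¹‖ ≤ Fintype.card ι * (U + 1) ^ (L + 1) :=
    norm_toEuclideanCLM_le_card_mul A⁻¹ (pow_nonneg hU _) fun i j =>
      (hx.abs_inv_apply_le hA.2.1 i j).trans (hxU i)
  refine ⟨hx.isUnit hA.2.1, ?_⟩
  calc condNum A ≤ (Fintype.card ι * (U + 1)) * (Fintype.card ι * (U + 1) ^ (L + 1)) := by
        rw [condNum_of_nonempty]
        gcongr
    _ = (Fintype.card ι : ℝ) ^ 2 * (U + 1) ^ (L + 2) := by ring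

lemma IsRDDL.isUnit_and_condNum_toSquareBlockProp_le [Nonempty ι] {M : Matrix ι ι ℝ} {U : ℝ}
    (hM : IsRDDL M) (hint : ∀ i j, M i j ∈ (Int.castRingHom ℝ).range) (hdiag : ∀ i, M i i ≤ U)
    {q : ι → Prop} [DecidablePred q] {L : ℕ}
    (hesc : ∀ i, EscapesWithin (M.toSquareBlockProp q) L i) :
    IsUnit (M.toSquareBlockProp q) ∧
      condNum (M.toSquareBlockProp q) ≤ (Fintype.card ι : ℝ) ^ 2 * (U + 1) ^ (L + 2) := by
  have hU : 0 ≤ U := ((hM.1 _).trans_le (hdiag (Classical.arbitrary ι))).le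
  cases isEmpty_or_nonempty {i // q i} with
  | inl _ =>
    refine ⟨isUnit_of_subsingleton _, ?_⟩
    rw [condNum_of_isEmpty]
    exact one_le_mul_of_one_le_of_one_le
      (one_le_pow₀ (Nat.one_le_cast.mpr Fintype.card_pos)) (one_le_pow₀ (by linarith))
  | inr _ =>
    refine (hM.toSquareBlockProp.isUnit_and_condNum_le (fun i j => hint i.1 j.1)
      (fun i => hdiag i.1) hesc).imp_right fun hcond => hcond.trans ?_
    gcongr
    exact Fintype.card_subtype_le q

end ConditionNumber

section Estimates

open Real

lemma mul_one_sub_pow_le {N p δ : ℝ} (hN : 0 < N) (hδ : 0 < δ) (hp0 : 0 < p) (hp1 : p ≤ 1)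
    {m : ℕ} (hm : p⁻¹ * log (N / δ) ≤ m) : N * (1 - p) ^ m ≤ δ := by
  have hlog : log (N / δ) ≤ m * p := by rwa [inv_mul_le_iff₀ hp0, mul_comm] at hm
  calc N * (1 - p) ^ m ≤ N * exp (-p) ^ m := by
        have : 0 ≤ 1 - p := sub_nonneg.mpr hp1
        gcongr
        exact one_sub_le_exp_neg p
    _ = N * exp (-(m * p)) := by rw [← exp_nat_mul, mul_neg]
    _ ≤ N * exp (-log (N / δ)) := by gcongr
    _ = δ := by rw [Real.exp_neg, exp_log (by positivity)]; field_simp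

lemma one_le_log_of_three_le {x : ℝ} (hx : 3 ≤ x) : 1 ≤ log x := by
  rw [le_log_iff_exp_le (by linarith)]
  linarith [exp_one_lt_d9]

lemma log_add_one_le {x : ℝ} (hx : 3 ≤ x) : log (x + 1) ≤ 4 / 3 * log x := by
  have hpow : (x + 1) ^ 3 ≤ x ^ 4 := by
    obtain ⟨y, hy, rfl⟩ := exists_nonneg_add_of_le hx
    rw [← sub_nonneg]
    ring_nf
    positivity
  have hlog := log_le_log (by positivity) hpow
  rw [log_pow, log_pow] at hlog
  push_cast at hlog
  linarith

/-- The constant `6` arises as `2 + 4 / 3 * (1 + 2)`. -/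
lemma sq_mul_add_one_pow_le_exp {N U s t : ℝ} (hN : 3 ≤ N) (hU : 3 ≤ U) (hs : 1 ≤ s)
    (ht : log N ≤ t) {L : ℕ} (hL : L ≤ s * t) :
    N ^ 2 * (U + 1) ^ (L + 2) ≤ exp (6 * s * log U * t) := by
  rw [← log_le_iff_le_exp (by positivity), log_mul (by positivity) (by positivity), log_pow,
    log_pow]
  push_cast
  have hu : 1 ≤ log U := one_le_log_of_three_le hU
  have ht1 : 1 ≤ t := (one_le_log_of_three_le hN).trans ht
  have hst : t ≤ s * t := le_mul_of_one_le_left (by linarith) hs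
  calc 2 * log N + (L + 2) * log (U + 1)
      ≤ 2 * (s * t) + (s * t + 2 * (s * t)) * (4 / 3 * log U) := by
        have hU1 : 0 ≤ log (U + 1) := log_nonneg (by linarith)
        have hlogU : log (U + 1) ≤ 4 / 3 * log U := log_add_one_le hU
        gcongr <;> linarith
    _ ≤ 2 * (s * t * log U) + (s * t + 2 * (s * t)) * (4 / 3 * log U) := by
        have hstu : s * t ≤ s * t * log U := le_mul_of_one_le_right (by linarith) hu
        linarith
    _ = 6 * s * log U * t := by ring

end Estimates

section RandomDeletion

variable [DecidableEq ι] {M : Matrix ι ι ℝ}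

lemma IsRDDL.measure_not_escapesWithin_le (hM : IsRDDL M) (hInv : IsUnit M) (β : Measure Bool)
    [IsProbabilityMeasure β] (L : ℕ) (i : ι) :
    Measure.pi (fun _ : ι => β)
        {ω | ∃ hi : ω i = false, ¬ EscapesWithin (M.toSquareBlockProp (ω · = false)) L ⟨i, hi⟩} ≤
      β {false} ^ (L + 1) := by
  by_cases hL : EscapesWithin M L i
  · simp [hL.toSquareBlockProp hM]
  obtain ⟨k, hk⟩ := hM.exists_escapesWithin hInv i
  obtain ⟨T, hcard, -, hT⟩ := hk.exists_finset_card_eq hM hL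
  calc _ ≤ Measure.pi (fun _ : ι => β) ((T : Set ι).pi fun _ => {false}) := by
        refine measure_mono fun ω ⟨hi, hesc⟩ v hv => ?_
        by_contra hωv
        exact hesc (hT (ω · = false) ⟨v, hv, hωv⟩ hi)
    _ = β {false} ^ (L + 1) := by rw [Measure.pi_pi_finset, Finset.prod_const, hcard]

lemma IsRDDL.measure_exists_not_escapesWithin_le (hM : IsRDDL M) (hInv : IsUnit M)
    (β : Measure Bool) [IsProbabilityMeasure β] (L : ℕ) :
    Measure.pi (fun _ : ι => β)
        {ω | ∃ i, ¬ EscapesWithin (M.toSquareBlockProp (ω · = false)) L i} ≤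
      Fintype.card ι * β {false} ^ (L + 1) := by
  simp only [Subtype.exists, Set.ofPred_exists]
  refine (measure_iUnion_fintype_le _ _).trans ?_
  refine (Finset.sum_le_card_nsmul _ _ _ fun i _ => ?_).trans_eq (nsmul_eq_mul _ _)
  simpa only [Set.ofPred_exists] using hM.measure_not_escapesWithin_le hInv β L i

lemma bernoulliMeasure_eq_ofReal_smul_add {X : Type*} [MeasurableSpace X] (x y : X) (p : I) :
    bernoulliMeasure x y p =
      ENNReal.ofReal p • Measure.dirac x + ENNReal.ofReal (1 - p) • Measure.dirac y := by
  have hp : ENNReal.ofReal p = toNNReal p :=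
    congrArg ((↑) : NNReal → ENNReal) (Real.toNNReal_of_nonneg p.2.1)
  have hσp : ENNReal.ofReal (1 - p) = toNNReal (σ p) :=
    congrArg ((↑) : NNReal → ENNReal) (Real.toNNReal_of_nonneg (σ p).2.1)
  rw [hp, hσp]
  rfl

lemma IsRDDL.one_sub_le_measure_forall_escapesWithin [Nonempty ι] (hM : IsRDDL M)
    (hInv : IsUnit M) {p : I} (hp : 0 < p) {δ : ℝ} (hδ : 0 < δ) {L : ℕ}
    (hL : (p : ℝ)⁻¹ * Real.log (Fintype.card ι / δ) ≤ L + 1) :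
    ENNReal.ofReal (1 - δ) ≤
      Measure.pi (fun _ : ι => bernoulliMeasure true false p)
        {ω | ∀ i, EscapesWithin (M.toSquareBlockProp (ω · = false)) L i} := by
  set μ := Measure.pi fun _ : ι => bernoulliMeasure true false p
  set good := {ω : ι → Bool | ∀ i, EscapesWithin (M.toSquareBlockProp (ω · = false)) L i}
  have hbad : μ goodᶜ ≤ ENNReal.ofReal δ := by
    calc μ goodᶜ ≤ Fintype.card ι * bernoulliMeasure true false p {false} ^ (L + 1) := by
          simpa only [good, Set.compl_ofPred, not_forall] using
            hM.measure_exists_not_escapesWithin_le hInv (bernoulliMeasure true false p) L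
      _ = ENNReal.ofReal (Fintype.card ι * (1 - p) ^ (L + 1)) := by
          rw [bernoulliMeasure_eq_ofReal_smul_add, ENNReal.ofReal_mul (Nat.cast_nonneg _),
            ENNReal.ofReal_natCast, ENNReal.ofReal_pow (sub_nonneg.mpr p.2.2)]
          simp
      _ ≤ ENNReal.ofReal δ := ENNReal.ofReal_le_ofReal <|
          mul_one_sub_pow_le (Nat.cast_pos.mpr Fintype.card_pos) hδ hp p.2.2 (by exact_mod_cast hL)
  calc ENNReal.ofReal (1 - δ) = 1 - ENNReal.ofReal δ := by
        rw [ENNReal.ofReal_sub _ hδ.le, ENNReal.ofReal_one]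
    _ ≤ 1 - μ goodᶜ := tsub_le_tsub_left hbad 1
    _ = μ good := by
        rw [← prob_compl_eq_one_sub good.toFinite.measurableSet.compl, compl_compl]

end RandomDeletion

theorem random_submatrix_condition_number_general [DecidableEq ι] (hcard : 3 ≤ Fintype.card ι)
    {U : ℝ} (hU : 3 ≤ U) {p : ℝ} (hp0 : 0 < p) (hp1 : p ≤ 1) {δ : ℝ} (hδ0 : 0 < δ) (hδ1 : δ ≤ 1)
    {M : Matrix ι ι ℝ} (hM : IsRDDL M) (hInv : IsUnit M)
    (hint : ∀ i j, M i j ∈ (Int.castRingHom ℝ).range) (hdiag : ∀ i, M i i ≤ U) :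
    ENNReal.ofReal (1 - δ) ≤
      Measure.pi (fun _ : ι => ENNReal.ofReal p • Measure.dirac true +
          ENNReal.ofReal (1 - p) • Measure.dirac false)
        {ω | IsUnit (M.toSquareBlockProp (ω · = false)) ∧
          condNum (M.toSquareBlockProp (ω · = false)) ≤
            Real.exp (6 * p⁻¹ * Real.log U * Real.log (Fintype.card ι / δ))} := by
  have : Nonempty ι := Fintype.card_pos_iff.mp (by omega)
  have hN : (3 : ℝ) ≤ Fintype.card ι := by exact_mod_cast hcard
  set t := Real.log (Fintype.card ι / δ)
  have ht : Real.log (Fintype.card ι) ≤ t :=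
    Real.log_le_log (by linarith) (le_div_self (by linarith) hδ0 hδ1)
  have hs : 1 ≤ p⁻¹ := one_le_inv_iff₀.mpr ⟨hp0, hp1⟩
  have hst : 0 ≤ p⁻¹ * t :=
    mul_nonneg (by linarith) ((Real.log_nonneg (by linarith)).trans ht)
  lift p to I using ⟨hp0.le, hp1⟩
  rw [← bernoulliMeasure_eq_ofReal_smul_add]
  refine (hM.one_sub_le_measure_forall_escapesWithin hInv hp0 hδ0
    (Nat.lt_floor_add_one ((p : ℝ)⁻¹ * t)).le).trans (measure_mono fun ω hω => ?_)
  exact (hM.isUnit_and_condNum_toSquareBlockProp_le hint hdiag hω).imp_right fun hcond =>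
    hcond.trans (sq_mul_add_one_pow_le_exp hN hU hs ht (Nat.floor_le hst))

/-- If each index is removed (kept in `S̄`, i.e. `ω i = false`) independently with
probability `1 - n^{-1/2}` (included in `S` with probability `n^{-1/2}`), then with
probability at least `1 - δ` the condition number of the principal submatrix `M_{S̄,S̄}`
is at most `exp(6·√n·ln U·ln(n/δ))`. -/
theorem random_submatrix_condition_number {n : ℕ} (hn : 3 < n) (U : ℕ) (hU : 3 < U)
    (δ : ℝ) (hδ0 : 0 < δ) (hδ1 : δ < 1)
    (M : Matrix (Fin n) (Fin n) ℝ) (hM : IsRDDL M) (hInv : IsUnit M)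
    (hint : ∀ i j, ∃ z : ℤ, M i j = (z : ℝ) ∧ |z| ≤ (U : ℤ))
    (μ : Measure (Fin n → Bool))
    (hμ : μ = Measure.pi fun _ : Fin n =>
      ENNReal.ofReal ((Real.sqrt n)⁻¹) • Measure.dirac true +
        ENNReal.ofReal (1 - (Real.sqrt n)⁻¹) • Measure.dirac false) :
    ENNReal.ofReal (1 - δ) ≤
      μ {ω : Fin n → Bool |
        condNum (M.submatrix (Subtype.val : {i // ω i = false} → Fin n)
          (Subtype.val : {i // ω i = false} → Fin n)) ≤
          Real.exp (6 * Real.sqrt n * Real.log U * Real.log (n / δ))} := by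
  have hsqrt : 1 ≤ Real.sqrt n := Real.one_le_sqrt.mpr (by exact_mod_cast (by omega : 1 ≤ n))
  have hdiag : ∀ i, M i i ≤ U := fun i => by
    obtain ⟨z, hz, hzU⟩ := hint i i
    exact hz.trans_le (by exact_mod_cast (le_abs_self z).trans hzU)
  have hmain := random_submatrix_condition_number_general (by simpa using hn.le)
    (show (3 : ℝ) ≤ U by exact_mod_cast hU.le) (inv_pos.mpr (zero_lt_one.trans_le hsqrt))
    (inv_le_one_of_one_le₀ hsqrt) hδ0 hδ1.le hM hInv
    (fun i j => (hint i j).imp fun z hz => hz.1.symm) hdiag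
  rw [← hμ, inv_inv, Fintype.card_fin] at hmain
  exact hmain.trans (measure_mono fun ω hω => hω.2)
end
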